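/- arXiv:1705.02127 — 2 statements merged into one kernel-verified Lean document; each statement's English description precedes it below -/
import Mathlib

section
/- Let l_1,…,l_n and r_1,…,r_n be d-dimensional bit vectors and let ℓ ≥ 1, p ∈ {0,1}, q ≥ 0 be integers, and let G = G_{L,R,ℓ,p,q}. For every 1 ≤ i ≤ n and 1 ≤ j ≤ n, every path in G from u_i^L to u_j^R contains entirely (as a subpath) at least one of the paths π(y^L,y^R), π(w_1^L,w_1^R), …, π(w_d^L,w_d^R). -/
namespace GraphOV

/-- Two bit vectors (functions into `Fin 2`) are orthogonal if in every coordinate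
at least one of them is `0`. -/
def Orth {d : ℕ} (a b : Fin d → Fin 2) : Prop := ∀ k, a k = 0 ∨ b k = 0

/-- A system of internally disjoint paths joining exterior vertices from `E`:
for each path name `i : ι` we record its two endpoints and its length. -/
structure PathSys (E : Type) (ι : Type) where
  src : ι → E
  dst : ι → E
  len : ι → ℕ

namespace PathSys

variable {E ι : Type}

/-- Endpoints of zero-length paths get identified. -/
def idRel (S : PathSys E ι) (a b : E) : Prop :=
  ∃ i, S.len i = 0 ∧ S.src i = a ∧ S.dst i = b

/-- Vertices of the glued graph: exterior vertices (up to identification) together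
with, for each path of length `m`, fresh interior vertices at positions `1,…,m-1`. -/
def Vert (S : PathSys E ι) : Type :=
  Quot S.idRel ⊕ Σ i : ι, {t : ℕ // 0 < t ∧ t < S.len i}

/-- The vertex corresponding to an exterior vertex. -/
def ext (S : PathSys E ι) (a : E) : S.Vert := Sum.inl (Quot.mk _ a)

/-- The `t`-th vertex on the path named `i` (for `0 ≤ t ≤ S.len i`). -/
def pt (S : PathSys E ι) (i : ι) (t : ℕ) : S.Vert :=
  if h : 0 < t ∧ t < S.len i then Sum.inr ⟨i, t, h⟩
  else if t = 0 then S.ext (S.src i) else S.ext (S.dst i)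

/-- The glued graph: consecutive vertices on each path are adjacent. -/
def graph (S : PathSys E ι) : SimpleGraph S.Vert :=
  SimpleGraph.fromRel fun a b =>
    ∃ i t, t + 1 ≤ S.len i ∧ a = S.pt i t ∧ b = S.pt i (t + 1)

/-- The set of vertices lying on the path named `i`. -/
def onPath (S : PathSys E ι) (i : ι) : Set S.Vert :=
  {v | ∃ t ≤ S.len i, v = S.pt i t}

/-- A walk in the glued graph contains the path named `i` entirely if all vertices of
that path occur consecutively (in forward or backward order) on the walk. -/
def WalkContainsPath (S : PathSys E ι) {x y : S.Vert} (W : S.graph.Walk x y) (i : ι) : Prop :=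
  ∃ a, a + S.len i ≤ W.length ∧
    ((∀ t ≤ S.len i, W.getVert (a + t) = S.pt i t) ∨
     (∀ t ≤ S.len i, W.getVert (a + t) = S.pt i (S.len i - t)))

end PathSys

/-- The exterior vertices of the graph `G_{L,R,ℓ,p,q}`. -/
inductive Ext (n d : ℕ) : Type
  | uL : Fin n → Ext n d
  | uR : Fin n → Ext n d
  | vL : Fin n → Ext n d
  | vR : Fin n → Ext n d
  | wL : Fin d → Ext n d
  | wR : Fin d → Ext n d
  | xL : Ext n d
  | xR : Ext n d
  | yL : Ext n d
  | yR : Ext n d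

/-- Names for the paths of the graph `G_{L,R,ℓ,p,q}`. -/
inductive Idx (n d : ℕ) (l r : Fin n → Fin d → Fin 2) : Type
  | uvL : Fin n → Idx n d l r
  | uvR : Fin n → Idx n d l r
  | vxL : Fin n → Idx n d l r
  | vxR : Fin n → Idx n d l r
  | vwL : (i : Fin n) → (k : Fin d) → l i k = 1 → Idx n d l r
  | vwR : (j : Fin n) → (k : Fin d) → r j k = 1 → Idx n d l r
  | ywL : Fin d → Idx n d l r
  | ywR : Fin d → Idx n d l r
  | ww : Fin d → Idx n d l r
  | xyL : Idx n d l r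
  | xyR : Idx n d l r
  | yy : Idx n d l r

/-- The path system defining the graph `G_{L,R,ℓ,p,q}`. -/
def sys (n d : ℕ) (l r : Fin n → Fin d → Fin 2) (ℓ p q : ℕ) :
    PathSys (Ext n d) (Idx n d l r) where
  src := fun i => match i with
    | .uvL i => .uL i
    | .uvR i => .uR i
    | .vxL i => .vL i
    | .vxR i => .vR i
    | .vwL i _ _ => .vL i
    | .vwR j _ _ => .vR j
    | .ywL _ => .yL
    | .ywR _ => .yR
    | .ww k => .wL k
    | .xyL => .xL
    | .xyR => .xR
    | .yy => .yL
  dst := fun i => match i with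
    | .uvL i => .vL i
    | .uvR i => .vR i
    | .vxL _ => .xL
    | .vxR _ => .xR
    | .vwL _ k _ => .wL k
    | .vwR _ k _ => .wR k
    | .ywL k => .wL k
    | .ywR k => .wR k
    | .ww k => .wR k
    | .xyL => .yL
    | .xyR => .yR
    | .yy => .yR
  len := fun i => match i with
    | .uvL _ => ℓ - p
    | .uvR _ => ℓ - p
    | .vxL _ => ℓ
    | .vxR _ => ℓ
    | .vwL _ _ _ => ℓ
    | .vwR _ _ _ => ℓ
    | .ywL _ => ℓ
    | .ywR _ => ℓ
    | .ww _ => q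
    | .xyL => ℓ - p
    | .xyR => ℓ - p
    | .yy => p + q

/-- The set `P_i^L`. -/
def PL (n d : ℕ) (l r : Fin n → Fin d → Fin 2) (ℓ p q : ℕ) (i : Fin n) :
    Set (sys n d l r ℓ p q).Vert :=
  (sys n d l r ℓ p q).onPath (.uvL i) ∪
    ((sys n d l r ℓ p q).onPath (.vxL i) \ {(sys n d l r ℓ p q).ext .xL}) ∪
    ⋃ (k : Fin d) (h : l i k = 1),
      ((sys n d l r ℓ p q).onPath (.vwL i k h) \ {(sys n d l r ℓ p q).ext (.wL k)})

/-- The set `P_j^R`. -/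
def PR (n d : ℕ) (l r : Fin n → Fin d → Fin 2) (ℓ p q : ℕ) (j : Fin n) :
    Set (sys n d l r ℓ p q).Vert :=
  (sys n d l r ℓ p q).onPath (.uvR j) ∪
    ((sys n d l r ℓ p q).onPath (.vxR j) \ {(sys n d l r ℓ p q).ext .xR}) ∪
    ⋃ (k : Fin d) (h : r j k = 1),
      ((sys n d l r ℓ p q).onPath (.vwR j k h) \ {(sys n d l r ℓ p q).ext (.wR k)})

/-- The set `V^L`. -/
def VL (n d : ℕ) (l r : Fin n → Fin d → Fin 2) (ℓ p q : ℕ) :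
    Set (sys n d l r ℓ p q).Vert := ⋃ i : Fin n, PL n d l r ℓ p q i

/-- The set `V^R`. -/
def VR (n d : ℕ) (l r : Fin n → Fin d → Fin 2) (ℓ p q : ℕ) :
    Set (sys n d l r ℓ p q).Vert := ⋃ j : Fin n, PR n d l r ℓ p q j

/-- The set `V^M` of all remaining vertices. -/
def VM (n d : ℕ) (l r : Fin n → Fin d → Fin 2) (ℓ p q : ℕ) :
    Set (sys n d l r ℓ p q).Vert := (VL n d l r ℓ p q ∪ VR n d l r ℓ p q)ᶜ

/-! A path that leaves a vertex set does so along some edge. If the set consists of the exterior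
vertices in `A` together with the paths having both ends in `A`, that edge is the first edge of
one of the glued paths, entered from its end in `A`; since interior vertices have degree two, it
is followed to its other end, which lies outside `A`. The gluing of zero-length paths may identify
a vertex in `A` with one outside `A`, and then a zero-length path between them is crossed
instead. -/

theorem exists_getVert_mem_succ_notMem {V : Type*} {G : SimpleGraph V} {x y : V} (W : G.Walk x y)
    {s : Set V} (hx : x ∈ s) (hy : y ∉ s) :
    ∃ m < W.length, W.getVert m ∈ s ∧ W.getVert (m + 1) ∉ s := by
  obtain ⟨e, he, hin, hout⟩ := W.exists_boundary_dart s hx hy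
  obtain ⟨m, hm, rfl⟩ := List.getElem_of_mem he
  rw [W.darts_getElem_eq_getVert] at hin hout
  exact ⟨m, W.length_darts ▸ hm, hin, hout⟩

theorem getVert_add_eq_of_enters_thread {V : Type*} {G : SimpleGraph V} {x y : V}
    {W : G.Walk x y} (hW : W.IsPath) {f : ℕ → V} {len m : ℕ}
    (hadj : ∀ t w, t + 1 < len → G.Adj (f (t + 1)) w → w = f t ∨ w = f (t + 2))
    (hy : ∀ t, t + 1 < len → f (t + 1) ≠ y)
    (hm : m < W.length) (h0 : W.getVert m = f 0) (h1 : W.getVert (m + 1) = f 1) :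
    ∀ t < len, m + t < W.length ∧ W.getVert (m + t) = f t ∧ W.getVert (m + t + 1) = f (t + 1) := by
  intro t ht
  induction t with
  | zero => exact ⟨hm, h0, h1⟩
  | succ t ih =>
    obtain ⟨hlt, hcur, hnext⟩ := ih (by omega)
    have hlt' : m + t + 1 < W.length := by
      refine lt_of_le_of_ne hlt fun hend => hy t ht ?_
      rw [← hnext, hend, W.getVert_length]
    refine ⟨hlt', hnext, ?_⟩
    have hstep := W.adj_getVert_succ hlt'
    rw [hnext] at hstep
    refine (hadj t _ ht hstep).resolve_left fun hback => ?_
    have : m + t + 1 + 1 = m + t :=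
      hW.getVert_injOn (Nat.succ_le_of_lt hlt') hlt.le (hback.trans hcur.symm)
    omega

namespace PathSys

variable {E ι : Type} {S : PathSys E ι} {i j : ι} {a b : E} {A : Set E} {s t : ℕ} {v w : S.Vert}

theorem pt_zero (S : PathSys E ι) (i : ι) : S.pt i 0 = S.ext (S.src i) := by
  simp [pt]

theorem ext_src_eq_ext_dst (h : S.len i = 0) : S.ext (S.src i) = S.ext (S.dst i) :=
  congrArg Sum.inl (Quot.sound ⟨i, h, rfl, rfl⟩)

theorem pt_len (S : PathSys E ι) (i : ι) : S.pt i (S.len i) = S.ext (S.dst i) := by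
  rcases Nat.eq_zero_or_pos (S.len i) with h | h
  · rw [h, pt_zero, ext_src_eq_ext_dst h]
  · simp [pt, h.ne']

theorem pt_eq_inr (h : 0 < t ∧ t < S.len i) : S.pt i t = Sum.inr ⟨i, t, h⟩ :=
  dif_pos h

theorem pt_ne_ext (h0 : 0 < t) (ht : t < S.len i) : S.pt i t ≠ S.ext a := by
  rw [pt_eq_inr ⟨h0, ht⟩]
  exact Sum.inr_ne_inl

theorem exists_pt_eq_ext (h : ¬(0 < t ∧ t < S.len i)) : ∃ a, S.pt i t = S.ext a := by
  have hpt : S.pt i t = if t = 0 then S.ext (S.src i) else S.ext (S.dst i) := dif_neg h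
  rw [hpt]
  split_ifs <;> exact ⟨_, rfl⟩

theorem eq_and_eq_of_pt_eq_pt (h0 : 0 < s) (hs : s < S.len i) (h : S.pt i s = S.pt j t) :
    i = j ∧ s = t := by
  by_cases ht : 0 < t ∧ t < S.len j
  · rw [pt_eq_inr ⟨h0, hs⟩, pt_eq_inr ht] at h
    cases h
    exact ⟨rfl, rfl⟩
  · obtain ⟨a, ha⟩ := exists_pt_eq_ext ht
    exact absurd (h.trans ha) (pt_ne_ext h0 hs)

theorem exists_pt_of_adj (h : S.graph.Adj v w) :
    ∃ i t, t < S.len i ∧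
      (v = S.pt i t ∧ w = S.pt i (t + 1) ∨ v = S.pt i (t + 1) ∧ w = S.pt i t) := by
  rw [graph, SimpleGraph.fromRel_adj] at h
  obtain ⟨-, ⟨i, t, ht, hv, hw⟩ | ⟨i, t, ht, hw, hv⟩⟩ := h
  · exact ⟨i, t, ht, .inl ⟨hv, hw⟩⟩
  · exact ⟨i, t, ht, .inr ⟨hv, hw⟩⟩

theorem eq_pt_of_adj_pt_succ (ht : t + 1 < S.len i) (h : S.graph.Adj (S.pt i (t + 1)) w) :
    w = S.pt i t ∨ w = S.pt i (t + 2) := by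
  obtain ⟨j, u, -, ⟨hv, rfl⟩ | ⟨hv, rfl⟩⟩ := exists_pt_of_adj h
  · obtain ⟨rfl, rfl⟩ := eq_and_eq_of_pt_eq_pt t.succ_pos ht hv
    exact .inr rfl
  · obtain ⟨rfl, hu⟩ := eq_and_eq_of_pt_eq_pt t.succ_pos ht hv
    rw [Nat.succ_injective hu]
    exact .inl rfl

/-- `S.Traverses i f a b` says that `f 0, …, f (S.len i)` are the vertices of the path named `i`,
listed in one of its two directions, from its end `a` to its end `b`. -/
inductive Traverses (S : PathSys E ι) (i : ι) : (ℕ → S.Vert) → E → E → Prop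
  | forward : Traverses S i (S.pt i) (S.src i) (S.dst i)
  | backward : Traverses S i (fun t => S.pt i (S.len i - t)) (S.dst i) (S.src i)

/-- The paths of `S` that have one end in `A` and the other outside `A`. -/
def cut (S : PathSys E ι) (A : Set E) : Set ι :=
  {i | Xor (S.src i ∈ A) (S.dst i ∈ A)}

/-- The vertices of the subsystem of `S` spanned by `A`: the exterior vertices in `A` and the
interior vertices of the paths with both ends in `A`. An exterior vertex counts as soon as one of
the points identified with it lies in `A`. -/
def span (S : PathSys E ι) (A : Set E) : Set S.Vert :=
  S.ext '' A ∪
    {v | ∃ i t, S.src i ∈ A ∧ S.dst i ∈ A ∧ 0 < t ∧ t < S.len i ∧ S.pt i t = v}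

theorem ext_mem_span : S.ext a ∈ S.span A ↔ S.ext a ∈ S.ext '' A := by
  refine ⟨?_, Or.inl⟩
  rintro (h | ⟨i, t, -, -, h0, ht, h⟩)
  · exact h
  · exact absurd h (pt_ne_ext h0 ht)

theorem pt_mem_span (hs : S.src i ∈ A) (hd : S.dst i ∈ A) (ht : t ≤ S.len i) :
    S.pt i t ∈ S.span A := by
  rcases Nat.eq_zero_or_pos t with rfl | h0
  · exact .inl ⟨_, hs, (pt_zero S i).symm⟩
  rcases ht.eq_or_lt with rfl | ht
  · exact .inl ⟨_, hd, (pt_len S i).symm⟩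
  · exact .inr ⟨i, t, hs, hd, h0, ht, rfl⟩

theorem src_mem_and_dst_mem_of_pt_mem_span (h0 : 0 < t) (ht : t < S.len i)
    (h : S.pt i t ∈ S.span A) : S.src i ∈ A ∧ S.dst i ∈ A := by
  obtain ⟨a, -, ha⟩ | ⟨j, u, hs, hd, -, -, h⟩ := h
  · exact absurd ha.symm (pt_ne_ext h0 ht)
  · obtain ⟨rfl, -⟩ := eq_and_eq_of_pt_eq_pt h0 ht h.symm
    exact ⟨hs, hd⟩

namespace Traverses

variable {f : ℕ → S.Vert}

theorem apply_zero (h : S.Traverses i f a b) : f 0 = S.ext a := by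
  cases h with
  | forward => exact pt_zero S i
  | backward => exact pt_len S i

theorem mem_cut (h : S.Traverses i f a b) (ha : a ∈ A) (hb : b ∉ A) : i ∈ S.cut A := by
  cases h with
  | forward => exact .inl ⟨ha, hb⟩
  | backward => exact .inr ⟨ha, hb⟩

theorem apply_ne_ext (h : S.Traverses i f a b) (h0 : 0 < t) (ht : t < S.len i) (c : E) :
    f t ≠ S.ext c := by
  cases h with
  | forward => exact pt_ne_ext h0 ht
  | backward => exact pt_ne_ext (by omega) (by omega)

theorem apply_mem_span (h : S.Traverses i f a b) (ha : a ∈ A) (hb : b ∈ A) (ht : t ≤ S.len i) :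
    f t ∈ S.span A := by
  cases h with
  | forward => exact pt_mem_span ha hb ht
  | backward => exact pt_mem_span hb ha (Nat.sub_le _ _)

theorem mem_and_mem_of_apply_mem_span (h : S.Traverses i f a b) (h0 : 0 < t) (ht : t < S.len i)
    (hspan : f t ∈ S.span A) : a ∈ A ∧ b ∈ A := by
  cases h with
  | forward => exact src_mem_and_dst_mem_of_pt_mem_span h0 ht hspan
  | backward => exact (src_mem_and_dst_mem_of_pt_mem_span (by omega) (by omega) hspan).symm

theorem eq_apply_of_adj_apply_succ (h : S.Traverses i f a b) (ht : t + 1 < S.len i)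
    (hadj : S.graph.Adj (f (t + 1)) w) : w = f t ∨ w = f (t + 2) := by
  cases h with
  | forward => exact eq_pt_of_adj_pt_succ ht hadj
  | backward =>
    obtain ⟨u, hu⟩ := Nat.exists_eq_add_of_lt ht
    simp only [show S.len i - (t + 1) = u + 1 by omega] at hadj
    simp only [show S.len i - t = u + 2 by omega, show S.len i - (t + 2) = u by omega]
    exact (eq_pt_of_adj_pt_succ (by omega) hadj).symm

theorem walkContainsPath (h : S.Traverses i f a b) {x y : S.Vert} {W : S.graph.Walk x y} {m : ℕ}
    (hm : m + S.len i ≤ W.length) (hf : ∀ t ≤ S.len i, W.getVert (m + t) = f t) :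
    S.WalkContainsPath W i := by
  cases h with
  | forward => exact ⟨m, hm, .inl hf⟩
  | backward => exact ⟨m, hm, .inr hf⟩

theorem walkContainsPath_of_enters (h : S.Traverses i f a b) (hi : 0 < S.len i) {x : S.Vert}
    {c : E} {W : S.graph.Walk x (S.ext c)} (hW : W.IsPath) {m : ℕ} (hm : m < W.length)
    (h0 : W.getVert m = f 0) (h1 : W.getVert (m + 1) = f 1) : S.WalkContainsPath W i := by
  have follow := getVert_add_eq_of_enters_thread hW (fun _ _ => h.eq_apply_of_adj_apply_succ)
    (fun t ht => h.apply_ne_ext t.succ_pos ht c) hm h0 h1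
  refine h.walkContainsPath (m := m) ?_ fun t ht => ?_
  · have := (follow (S.len i - 1) (by omega)).1
    omega
  · cases t with
    | zero => exact h0
    | succ t => exact (follow t ht).2.2

end Traverses

theorem exists_traverses_of_adj (h : S.graph.Adj v w) :
    ∃ i f a b t, S.Traverses i f a b ∧ t < S.len i ∧ v = f t ∧ w = f (t + 1) := by
  obtain ⟨i, t, ht, ⟨hv, hw⟩ | ⟨hv, hw⟩⟩ := exists_pt_of_adj h
  · exact ⟨i, _, _, _, t, .forward, ht, hv, hw⟩
  · refine ⟨i, _, _, _, S.len i - (t + 1), .backward, by omega, ?_, ?_⟩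
    · rw [hv, Nat.sub_sub_self ht]
    · rw [hw, show S.len i - (S.len i - (t + 1) + 1) = t by omega]

theorem exists_traverses_of_adj_of_mem_span (h : S.graph.Adj v w) (hv : v ∈ S.span A)
    (hw : w ∉ S.span A) :
    ∃ i f a b, S.Traverses i f a b ∧ 0 < S.len i ∧ v = f 0 ∧ w = f 1 ∧ (a ∈ A → b ∉ A) := by
  obtain ⟨i, f, a, b, t, hf, ht, rfl, rfl⟩ := exists_traverses_of_adj h
  have hab : a ∈ A → b ∉ A := fun ha hb => hw (hf.apply_mem_span ha hb ht)
  obtain rfl : t = 0 := by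
    by_contra h0
    obtain ⟨ha, hb⟩ := hf.mem_and_mem_of_apply_mem_span (Nat.pos_of_ne_zero h0) ht hv
    exact hab ha hb
  exact ⟨i, f, a, b, hf, ht, rfl, rfl, hab⟩

theorem exists_mem_cut_of_ext_eq (h : S.ext a = S.ext b) (ha : a ∈ A) (hb : b ∉ A) :
    ∃ i ∈ S.cut A, S.len i = 0 ∧ S.ext (S.src i) = S.ext a := by
  by_contra! hno
  -- Membership in `A` is then constant on the class of points identified with `a`.
  have hconst : ∀ c c', S.idRel c c' →
      (S.ext c = S.ext a ∧ c ∈ A) = (S.ext c' = S.ext a ∧ c' ∈ A) := by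
    rintro _ _ ⟨i, hi, rfl, rfl⟩
    rw [← ext_src_eq_ext_dst hi]
    refine propext (and_congr_right fun hsrc => ?_)
    by_contra hcross
    exact hno i (xor_iff_not_iff _ _ |>.mpr hcross) hi hsrc
  have hlift := congrArg (Quot.lift _ hconst) (Sum.inl.inj h)
  exact hb (hlift.mp ⟨rfl, ha⟩).2

theorem walkContainsPath_of_len_eq_zero (hi : S.len i = 0) {x y : S.Vert}
    {W : S.graph.Walk x y} (h : S.ext (S.src i) ∈ W.support) : S.WalkContainsPath W i := by
  obtain ⟨m, hm, hle⟩ := SimpleGraph.Walk.mem_support_iff_exists_getVert.mp h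
  refine Traverses.forward.walkContainsPath (m := m) (by omega) fun t ht => ?_
  obtain rfl : t = 0 := by omega
  rw [pt_zero, Nat.add_zero, hm]

theorem exists_mem_cut_walkContainsPath_of_ext_eq (h : S.ext a = S.ext b) (ha : a ∈ A)
    (hb : b ∉ A) {x y : S.Vert} {W : S.graph.Walk x y} (hsupp : S.ext b ∈ W.support) :
    ∃ i ∈ S.cut A, S.WalkContainsPath W i := by
  obtain ⟨i, hcut, hi, hsrc⟩ := exists_mem_cut_of_ext_eq h ha hb
  exact ⟨i, hcut, walkContainsPath_of_len_eq_zero hi (hsrc.trans h ▸ hsupp)⟩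

end PathSys

theorem path_crosses_cut_general {E ι : Type} {S : PathSys E ι} {A : Set E} {a b : E}
    (ha : a ∈ A) (hb : b ∉ A) {W : S.graph.Walk (S.ext a) (S.ext b)} (hW : W.IsPath) :
    ∃ i ∈ S.cut A, S.WalkContainsPath W i := by
  by_cases hend : S.ext b ∈ S.span A
  · obtain ⟨c, hc, hcb⟩ := PathSys.ext_mem_span.mp hend
    exact PathSys.exists_mem_cut_walkContainsPath_of_ext_eq hcb hc hb W.end_mem_support
  obtain ⟨m, hm, hin, hout⟩ :=
    exists_getVert_mem_succ_notMem W (PathSys.ext_mem_span.mpr ⟨a, ha, rfl⟩) hend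
  obtain ⟨i, f, a', b', hf, hi, h0, h1, hab⟩ :=
    PathSys.exists_traverses_of_adj_of_mem_span (W.adj_getVert_succ hm) hin hout
  by_cases ha' : a' ∈ A
  · exact ⟨i, hf.mem_cut ha' (hab ha'), hf.walkContainsPath_of_enters hi hW hm h0 h1⟩
  · have hm' : W.getVert m = S.ext a' := h0.trans hf.apply_zero
    obtain ⟨c, hc, hca'⟩ := PathSys.ext_mem_span.mp (hm' ▸ hin)
    exact PathSys.exists_mem_cut_walkContainsPath_of_ext_eq hca' hc ha'
      (hm' ▸ W.getVert_mem_support m)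

/-- The left half of the exterior vertices of `G_{L,R,ℓ,p,q}`, whose cut consists of the paths
`π(y^L,y^R)` and `π(w_k^L,w_k^R)`. -/
def leftExt (n d : ℕ) : Set (Ext n d) :=
  {a | match a with
    | .uL _ | .vL _ | .wL _ | .xL | .yL => True
    | .uR _ | .vR _ | .wR _ | .xR | .yR => False}

theorem eq_yy_or_eq_ww_of_mem_cut_leftExt {n d ℓ p q : ℕ} {l r : Fin n → Fin d → Fin 2}
    {e : Idx n d l r} (he : e ∈ (sys n d l r ℓ p q).cut (leftExt n d)) :
    e = .yy ∨ ∃ k, e = .ww k := by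
  cases e <;> simp_all [PathSys.cut, leftExt, sys, Xor]

theorem path_crosses_cut (n d ℓ p q : ℕ) (hn : 1 ≤ n) (hd : 1 ≤ d) (hℓ : 1 ≤ ℓ)
    (hp : p ≤ 1) (l r : Fin n → Fin d → Fin 2) :
    ∀ (i j : Fin n)
      (W : (sys n d l r ℓ p q).graph.Walk ((sys n d l r ℓ p q).ext (.uL i))
        ((sys n d l r ℓ p q).ext (.uR j))), W.IsPath →
      (sys n d l r ℓ p q).WalkContainsPath W .yy ∨
        ∃ k : Fin d, (sys n d l r ℓ p q).WalkContainsPath W (.ww k) := by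
  intro i j W hW
  obtain ⟨e, hcut, he⟩ :=
    path_crosses_cut_general (A := leftExt n d) (a := .uL i) (b := .uR j) trivial id hW
  obtain rfl | ⟨k, rfl⟩ := eq_yy_or_eq_ww_of_mem_cut_leftExt hcut
  exacts [.inl he, .inr ⟨k, he⟩]

end GraphOV
end

section
/- Let x and y be n-dimensional bit vectors and let s_i denote the binary representation of the index i with ⌈log n⌉ bits. For each 1 ≤ i ≤ n let l_i be the bit vector obtained by concatenating x[i], ¬x[i], ¬x[i], s_i, and ¬s_i, and let r_j be the bit vector obtained by concatenating ¬y[j], y[j], ¬y[j], ¬s_j, and s_j. If l_i and r_j are orthogonal for some 1 ≤ i, j ≤ n, then i = j and x[i] = y[i] = 1. -/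
namespace BitOV

/-- Two bit vectors (functions into `Fin 2`) are orthogonal if in every coordinate
at least one of them is `0`. -/
def Orth {d : ℕ} (a b : Fin d → Fin 2) : Prop := ∀ k, a k = 0 ∨ b k = 0

/-- Flip a bit: `¬1 = 0` and `¬0 = 1`. -/
def bflip (b : Fin 2) : Fin 2 := 1 - b

/-- The `k`-th bit of the binary representation of `m`. -/
def bitAt (m k : ℕ) : Fin 2 := if Nat.testBit m k then 1 else 0

/-- The binary representation of the index `i` with `⌈log n⌉` bits. -/
def srep (n : ℕ) (i : Fin n) : Fin (Nat.clog 2 n) → Fin 2 := fun k => bitAt i.val k.val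

/-- The vector `l_i`: the concatenation of `x[i]`, `¬x[i]`, `¬x[i]`, `s_i` and `¬s_i`. -/
def lvec {n : ℕ} (x : Fin n → Fin 2) (i : Fin n) :
    Fin (3 + Nat.clog 2 n + Nat.clog 2 n) → Fin 2 :=
  Fin.append (Fin.append ![x i, bflip (x i), bflip (x i)] (srep n i))
    (fun k => bflip (srep n i k))

/-- The vector `r_j`: the concatenation of `¬y[j]`, `y[j]`, `¬y[j]`, `¬s_j` and `s_j`. -/
def rvec {n : ℕ} (y : Fin n → Fin 2) (j : Fin n) :
    Fin (3 + Nat.clog 2 n + Nat.clog 2 n) → Fin 2 :=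
  Fin.append (Fin.append ![bflip (y j), y j, bflip (y j)] (fun k => bflip (srep n j k)))
    (srep n j)

/-!
Orthogonality of `a` with the flip of `b` means `a ≤ b` coordinatewise. Pairing `s_i` with `¬s_j`
and `¬s_i` with `s_j` therefore forces `s_i = s_j`, hence `i = j`, because `⌈log n⌉` bits
distinguish the indices below `n`. In the same way the pairs `(x[i], ¬y[j])` and `(¬x[i], y[j])`
force `x[i] = y[j]`, and the pair `(¬x[i], ¬y[j])` rules out the common value `0`.
-/

theorem bflip_eq_zero_iff {a : Fin 2} : bflip a = 0 ↔ a = 1 := by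
  decide +revert

theorem eq_zero_or_bflip_eq_zero_iff {a b : Fin 2} : a = 0 ∨ bflip b = 0 ↔ a ≤ b := by
  decide +revert

theorem orth_comm {d : ℕ} {a b : Fin d → Fin 2} : Orth a b ↔ Orth b a :=
  forall_congr' fun _ => or_comm

theorem orth_bflip_right_iff {d : ℕ} {a b : Fin d → Fin 2} :
    Orth a (fun k => bflip (b k)) ↔ a ≤ b :=
  forall_congr' fun _ => eq_zero_or_bflip_eq_zero_iff

theorem orth_bflip_left_iff {d : ℕ} {a b : Fin d → Fin 2} :
    Orth (fun k => bflip (a k)) b ↔ b ≤ a :=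
  orth_comm.trans orth_bflip_right_iff

theorem orth_append_iff {m n : ℕ} {a a' : Fin m → Fin 2} {b b' : Fin n → Fin 2} :
    Orth (Fin.append a b) (Fin.append a' b') ↔ Orth a a' ∧ Orth b b' := by
  simp only [Orth, Fin.forall_fin_add, Fin.append_left, Fin.append_right]

theorem orth_bit_triple_iff {a b : Fin 2} :
    Orth ![a, bflip a, bflip a] ![bflip b, b, bflip b] ↔ a = 1 ∧ b = 1 := by
  have orth_iff_le : Orth ![a, bflip a, bflip a] ![bflip b, b, bflip b] ↔
      a ≤ b ∧ b ≤ a ∧ (a = 1 ∨ b = 1) := by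
    simp [Orth, Fin.forall_fin_succ, bflip_eq_zero_iff, ← eq_zero_or_bflip_eq_zero_iff, or_comm]
  rw [orth_iff_le, ← and_assoc, ← le_antisymm_iff]
  constructor
  · rintro ⟨rfl, ha | ha⟩ <;> exact ⟨ha, ha⟩
  · rintro ⟨rfl, rfl⟩
    exact ⟨rfl, Or.inl rfl⟩

theorem bitAt_eq_bitAt_iff {m m' k : ℕ} :
    bitAt m k = bitAt m' k ↔ m.testBit k = m'.testBit k := by
  unfold bitAt
  cases m.testBit k <;> cases m'.testBit k <;> decide

theorem eq_of_bitAt_eq {w m m' : ℕ} (hm : m < 2 ^ w) (hm' : m' < 2 ^ w)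
    (h : ∀ k < w, bitAt m k = bitAt m' k) : m = m' := by
  refine Nat.eq_of_testBit_eq fun k => ?_
  obtain hk | hk := lt_or_ge k w
  · exact bitAt_eq_bitAt_iff.1 (h k hk)
  · have hpow : 2 ^ w ≤ 2 ^ k := Nat.pow_le_pow_right two_pos hk
    rw [Nat.testBit_eq_false_of_lt (hm.trans_le hpow),
      Nat.testBit_eq_false_of_lt (hm'.trans_le hpow)]

theorem srep_injective (n : ℕ) : Function.Injective (srep n) := by
  intro i j hij
  have hn : n ≤ 2 ^ Nat.clog 2 n := Nat.le_pow_clog one_lt_two n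
  exact Fin.ext <| eq_of_bitAt_eq (i.isLt.trans_le hn) (j.isLt.trans_le hn)
    fun k hk => congrFun hij ⟨k, hk⟩

theorem orth_lvec_rvec_iff {n : ℕ} {x y : Fin n → Fin 2} {i j : Fin n} :
    Orth (lvec x i) (rvec y j) ↔ i = j ∧ x i = 1 ∧ y j = 1 := by
  calc Orth (lvec x i) (rvec y j)
      ↔ (Orth ![x i, bflip (x i), bflip (x i)] ![bflip (y j), y j, bflip (y j)] ∧
          Orth (srep n i) (fun k => bflip (srep n j k))) ∧
          Orth (fun k => bflip (srep n i k)) (srep n j) := by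
        rw [lvec, rvec, orth_append_iff, orth_append_iff]
    _ ↔ (x i = 1 ∧ y j = 1) ∧ srep n i = srep n j := by
        rw [orth_bit_triple_iff, orth_bflip_right_iff, orth_bflip_left_iff, and_assoc,
          ← le_antisymm_iff]
    _ ↔ i = j ∧ x i = 1 ∧ y j = 1 := by
        rw [(srep_injective n).eq_iff, and_comm]

theorem orthogonal_pair_implies_common_one (n : ℕ) (hn : 1 ≤ n)
    (x y : Fin n → Fin 2) (i j : Fin n) (h : Orth (lvec x i) (rvec y j)) :
    i = j ∧ x i = 1 ∧ y i = 1 := by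
  obtain ⟨rfl, hx, hy⟩ := orth_lvec_rvec_iff.1 h
  exact ⟨rfl, hx, hy⟩

end BitOV
end
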